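/- Let X be a real Banach space, Ω ⊊ X a domain (open connected nonempty proper subset), and j the distance ratio metric on Ω. Then for every x₀ ∈ Ω and every r ∈ (0, log 2], the j-ball B_j(x₀,r) is starlike with respect to x₀. -/

import Mathlib

open Set Metric MeasureTheory

noncomputable section

variable {E : Type*} [NormedAddCommGroup E] [NormedSpace ℝ E]

/-- The quasihyperbolic length of a path `γ` (parametrized on `[0,1]`) in the
domain `Ω`: the integral of `‖γ'(t)‖ / d(γ(t), ∂Ω)`. -/
def qhLength (Ω : Set E) (γ : ℝ → E) : ℝ :=
  ∫ t in (0:ℝ)..1, ‖deriv γ t‖ / infDist (γ t) (frontier Ω)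

/-- A rectifiable curve in `Ω` joining `x` and `y`, formalized as a map on `[0,1]`
which is Lipschitz on `[0,1]` (every rectifiable curve admits such a
parametrization), takes values in `Ω`, and joins `x` to `y`. -/
def IsRectPath (Ω : Set E) (x y : E) (γ : ℝ → E) : Prop :=
  (∃ K : NNReal, LipschitzOnWith K γ (Icc 0 1)) ∧
    MapsTo γ (Icc 0 1) Ω ∧ γ 0 = x ∧ γ 1 = y

/-- The quasihyperbolic metric on `Ω`. -/
def qhDist (Ω : Set E) (x y : E) : ℝ :=
  sInf (qhLength Ω '' {γ | IsRectPath Ω x y γ})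

/-- The quasihyperbolic ball. -/
def qhBall (Ω : Set E) (x : E) (r : ℝ) : Set E :=
  {y ∈ Ω | qhDist Ω x y < r}

/-- The distance ratio metric (`j`-metric) on `Ω`. -/
def jDist (Ω : Set E) (x y : E) : ℝ :=
  Real.log (1 + dist x y / min (infDist x (frontier Ω)) (infDist y (frontier Ω)))

/-- The `j`-metric ball. -/
def jBall (Ω : Set E) (x : E) (r : ℝ) : Set E :=
  {y ∈ Ω | jDist Ω x y < r}

/-- `G` is strictly starlike with respect to `x`: it is starlike with respect to `x`
and every half-line emanating from `x` meets `∂G` at exactly one point. -/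
def StrictlyStarlike (G : Set E) (x : E) : Prop :=
  StarConvex ℝ x G ∧
    ∀ v : E, v ≠ 0 → ∃! p : E, p ∈ frontier G ∧ ∃ t : ℝ, 0 < t ∧ p = x + t • v

/-- `G` is strictly convex: it is strictly starlike with respect to each of its points. -/
def StrictlyConvexSet (G : Set E) : Prop :=
  ∀ x ∈ G, StrictlyStarlike G x

/-- A half-line: `{t • v + z : t > 0}` or `{t • v + z : t ≥ 0}` with `v ≠ 0`. -/
def IsHalfline (L : Set E) : Prop :=
  ∃ z v : E, v ≠ 0 ∧
    (L = {p | ∃ t : ℝ, 0 < t ∧ p = t • v + z} ∨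
      L = {p | ∃ t : ℝ, 0 ≤ t ∧ p = t • v + z})

/-- `G` is close-to-convex: its complement can be covered with pairwise
non-intersecting half-lines. -/
def CloseToConvex (G : Set E) : Prop :=
  ∃ 𝒮 : Set (Set E), (∀ L ∈ 𝒮, IsHalfline L) ∧ 𝒮.PairwiseDisjoint id ∧ Gᶜ = ⋃₀ 𝒮

end

/-!
For `r ≤ log 2` the factor `e ^ r - 1` lies in `(-1, 1]`, and `B_j(x₀, r)` is the set of all `y`
with `‖x₀ - y‖ < (e ^ r - 1) * min (d(x₀, ∂Ω)) (d(y, ∂Ω))`; membership of `y` in `Ω` is then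
automatic, because the norm ball about `x₀` of radius `d(x₀, ∂Ω)` does not leave `Ω`. The right-hand
side is a `1`-Lipschitz function of `y`, so it decreases by at most `‖y - z‖` when `y` moves to a
point `z` of `[x₀, y]`, whereas the left-hand side decreases by exactly `‖y - z‖`.
-/

theorem subset_of_isPreconnected_of_disjoint_frontier {α : Type*} [TopologicalSpace α]
    {s t : Set α} (hs : IsPreconnected s) (hst : (s ∩ t).Nonempty)
    (hdisj : Disjoint s (frontier t)) : s ⊆ t := by
  obtain ⟨x, hxs, hxt⟩ := hst
  have mem_interior {y : α} (hys : y ∈ s) (hyt : y ∈ closure t) : y ∈ interior t := by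
    by_contra hy
    exact disjoint_left.1 hdisj hys ⟨hyt, hy⟩
  have hsub : s ⊆ interior t :=
    hs.subset_of_closure_inter_subset isOpen_interior
      ⟨x, hxs, mem_interior hxs (subset_closure hxt)⟩
      fun _ hy ↦ mem_interior hy.2 (closure_mono interior_subset hy.1)
  exact hsub.trans interior_subset

theorem infDist_frontier_pos_of_isOpen {α : Type*} [PseudoMetricSpace α] {s : Set α} {x : α}
    (hs : IsOpen s) (hfr : (frontier s).Nonempty) (hx : x ∈ s) : 0 < infDist x (frontier s) :=
  (isClosed_frontier.notMem_iff_infDist_pos hfr).1 <|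
    disjoint_right.1 (disjoint_frontier_iff_isOpen.2 hs) hx

theorem abs_exp_sub_one_le_one_iff {r : ℝ} : |Real.exp r - 1| ≤ 1 ↔ r ≤ Real.log 2 := by
  have hpos : 0 < Real.exp r := Real.exp_pos r
  rw [Real.le_log_iff_exp_le two_pos, abs_le]
  constructor
  · rintro ⟨-, h⟩
    linarith
  · intro h
    constructor <;> linarith

section SeminormedSpace

variable {E : Type*} [SeminormedAddCommGroup E] [NormedSpace ℝ E]

theorem ball_infDist_frontier_subset {s : Set E} {x : E} (hx : x ∈ s) :
    ball x (infDist x (frontier s)) ⊆ s := by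
  intro y hy
  exact subset_of_isPreconnected_of_disjoint_frontier (convex_ball _ _).isPreconnected
    ⟨x, mem_ball_self (pos_of_mem_ball hy), hx⟩ disjoint_ball_infDist hy

theorem starConvex_setOf_dist_lt_of_lipschitzWith {f : E → ℝ} (hf : LipschitzWith 1 f) (x : E) :
    StarConvex ℝ x {y | dist x y < f y} := by
  refine starConvex_iff_segment_subset.2 fun y (hy : dist x y < f y) z hz ↦ ?_
  calc dist x z = dist x y - dist z y := eq_sub_of_add_eq (dist_add_dist_of_mem_segment hz)
    _ < f y - dist y z := by rw [dist_comm z y]; gcongr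
    _ ≤ f z := sub_le_iff_le_add.2 (by simpa using hf.le_add_mul y z)

end SeminormedSpace

theorem lipschitzWith_const_mul_min_infDist {α : Type*} [PseudoMetricSpace α] {c : ℝ}
    (hc : |c| ≤ 1) (a : ℝ) (s : Set α) :
    LipschitzWith 1 fun y ↦ c * min a (infDist y s) :=
  ((lipschitzWith_smul c).comp ((lipschitz_infDist_pt s).const_min a)).weaken <| by
    simpa [← NNReal.coe_le_coe] using hc

section JMetric

variable {E : Type*} [NormedAddCommGroup E] {Ω : Set E} {x y : E} {r : ℝ}

theorem jDist_lt_iff_dist_lt (hx : 0 < infDist x (frontier Ω)) (hy : 0 < infDist y (frontier Ω)) :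
    jDist Ω x y < r ↔
      dist x y < (Real.exp r - 1) * min (infDist x (frontier Ω)) (infDist y (frontier Ω)) := by
  have hmin : 0 < min (infDist x (frontier Ω)) (infDist y (frontier Ω)) := lt_min hx hy
  rw [jDist, Real.log_lt_iff_lt_exp (by positivity), ← div_lt_iff₀ hmin, lt_sub_iff_add_lt']

theorem jBall_eq_setOf_dist_lt [NormedSpace ℝ E] (hΩ : IsOpen Ω) (hfr : (frontier Ω).Nonempty)
    (hx : x ∈ Ω) (hr : r ≤ Real.log 2) :
    jBall Ω x r = {y | dist x y <
      (Real.exp r - 1) * min (infDist x (frontier Ω)) (infDist y (frontier Ω))} := by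
  have hpos {z : E} (hz : z ∈ Ω) : 0 < infDist z (frontier Ω) :=
    infDist_frontier_pos_of_isOpen hΩ hfr hz
  ext y
  refine ⟨fun ⟨hy, hlt⟩ ↦ (jDist_lt_iff_dist_lt (hpos hx) (hpos hy)).1 hlt,
    fun (hlt : dist x y < _) ↦ ?_⟩
  have hy_ball : dist x y < infDist x (frontier Ω) :=
    calc dist x y
        < (Real.exp r - 1) * min (infDist x (frontier Ω)) (infDist y (frontier Ω)) := hlt
      _ ≤ min (infDist x (frontier Ω)) (infDist y (frontier Ω)) :=
        mul_le_of_le_one_left (le_min infDist_nonneg infDist_nonneg)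
          (abs_le.1 (abs_exp_sub_one_le_one_iff.2 hr)).2
      _ ≤ infDist x (frontier Ω) := min_le_left _ _
  have hy : y ∈ Ω := ball_infDist_frontier_subset hx (mem_ball'.2 hy_ball)
  exact ⟨hy, (jDist_lt_iff_dist_lt (hpos hx) (hpos hy)).2 hlt⟩

end JMetric

theorem j_ball_starlike_banach_general {E : Type*} [NormedAddCommGroup E] [NormedSpace ℝ E]
    {Ω : Set E} (hopen : IsOpen Ω) (hproper : Ω ≠ univ) {x₀ : E} (hx₀ : x₀ ∈ Ω)
    {r : ℝ} (hr : r ≤ Real.log 2) : StarConvex ℝ x₀ (jBall Ω x₀ r) := by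
  have hfr : (frontier Ω).Nonempty := nonempty_frontier_iff.2 ⟨⟨x₀, hx₀⟩, hproper⟩
  rw [jBall_eq_setOf_dist_lt hopen hfr hx₀ hr]
  exact starConvex_setOf_dist_lt_of_lipschitzWith
    (lipschitzWith_const_mul_min_infDist (abs_exp_sub_one_le_one_iff.2 hr) _ _) x₀

/-- in any domain of a real Banach space, `j`-balls are starlike with
respect to their center for radii `r ≤ log 2`. -/
theorem j_ball_starlike_banach (X : Type*) [NormedAddCommGroup X] [NormedSpace ℝ X]
    [CompleteSpace X] (Ω : Set X)
    (hopen : IsOpen Ω) (hconn : IsConnected Ω) (hproper : Ω ≠ univ)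
    (x₀ : X) (hx₀ : x₀ ∈ Ω) (r : ℝ) (hr0 : 0 < r) (hr : r ≤ Real.log 2) :
    StarConvex ℝ x₀ (jBall Ω x₀ r) :=
  j_ball_starlike_banach_general hopen hproper hx₀ hr
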